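/- Let {X_k} be a Markov chain on a finite state space S with initial distribution q and irreducible transition probability matrix P. Let S⁽²⁾ = { (x,y) : P(x,y) > 0 } with pair transition matrix P⁽²⁾((x,y),(z,w)) = 1{y=z} P(y,w), and let f⁽²⁾ : S⁽²⁾ → [a,b]. Then for every t > 0, Pr_q( |Σ_{k=1}^n ( f⁽²⁾(X_k, X_{k+1}) − E_q[f⁽²⁾(X_k, X_{k+1})] )| ≥ t ) ≤ 2 exp( −t² / (2ν²) ), where ν² = (1/4) n (b−a)² HitT(P⁽²⁾)². -/

import Mathlib

/-!
The proof is the martingale method. Let `H N x` (`sumMean`) be the expected sum of `f⁽²⁾` over the next `N`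
transitions of the chain started at `x`. Given the past, the only randomness in the `k`-th Doob
martingale difference is that of the transition `c = (X_k, X_{k+1})`, through
`tailMean N c = f⁽²⁾ c + H N c.2`. Its oscillation over `S⁽²⁾` is at most `(b - a) HitT(P⁽²⁾)`
(`tailMean_sub_le_HitT`): run the pair chain from `c` until it hits `d`. From then on it
follows the law of the chain started at `d`, with a delay equal to the hitting time, and each
unit of delay costs at most `b - a`. For this bound the expected hitting times have to be finite
(otherwise `HitT` carries a junk value), which irreducibility provides
(`summable_survive`, `pair_reachable`).

Hoeffding's lemma for each of the `n` successive transitions then bounds the moment generating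
function of the centred sum by `exp (θ² ν² / 2)` (`sum_mul_mgf_le`), and Chernoff's bound with
`θ = t / ν²`, applied to both tails, concludes. The first state and the first transition are
integrated out together as a single draw from `q(x) P(x,y)`, so there are `n` factors and
not `n + 1`.
-/

open Finset

namespace MC

variable {S : Type*}

/-- `q` is a probability distribution on the finite state space `S`. -/
def IsProbVec [Fintype S] (q : S → ℝ) : Prop :=
  (∀ x, 0 ≤ q x) ∧ ∑ x, q x = 1

/-- `P` is a transition probability matrix (row-stochastic). -/
def IsStochastic [Fintype S] (P : S → S → ℝ) : Prop :=
  (∀ x y, 0 ≤ P x y) ∧ ∀ x, ∑ y, P x y = 1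

/-- `n`-step transition probabilities `Pⁿ(x,y)`. -/
def matPow [Fintype S] [DecidableEq S] (P : S → S → ℝ) : ℕ → S → S → ℝ
  | 0 => fun x y => if x = y then 1 else 0
  | n + 1 => fun x y => ∑ z, matPow P n x z * P z y

/-- `P` is irreducible: any state can reach any state. -/
def IsIrreducible [Fintype S] [DecidableEq S] (P : S → S → ℝ) : Prop :=
  ∀ x y, ∃ n, 1 ≤ n ∧ 0 < matPow P n x y

/-- `survive P y n x = Pr(T_y > n | X_1 = x)`, where
`T_y = inf {n ≥ 0 : X_{n+1} = y}` is the hitting time of `y`. -/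
def survive [Fintype S] [DecidableEq S] (P : S → S → ℝ) (y : S) : ℕ → S → ℝ
  | 0 => fun x => if x = y then 0 else 1
  | n + 1 => fun x => if x = y then 0 else ∑ z, P x z * survive P y n z

/-- The expected hitting time `E[T_y | X_1 = x] = ∑_{n ≥ 0} Pr(T_y > n | X_1 = x)`. -/
noncomputable def hitExp [Fintype S] [DecidableEq S] (P : S → S → ℝ) (x y : S) : ℝ :=
  (∑' n, ENNReal.ofReal (survive P y n x)).toReal

/-- The maximum expected hitting time `HitT(P) = max_{x,y} E[T_y | X_1 = x]`. -/
noncomputable def HitT [Fintype S] [DecidableEq S] (P : S → S → ℝ) : ℝ :=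
  ⨆ x, ⨆ y, hitExp P x y

/-- The probability of the cylinder set given by the path `ω = (X_1, …, X_{n+1})`
for the chain with initial distribution `q` and transition matrix `P`. -/
noncomputable def pathProb [Fintype S] (q : S → ℝ) (P : S → S → ℝ) {n : ℕ}
    (ω : Fin (n + 1) → S) : ℝ :=
  q (ω 0) * ∏ i : Fin n, P (ω i.castSucc) (ω i.succ)

/-- `Pr_q(A)` for an event `A` determined by the first `n+1` states `(X_1, …, X_{n+1})`. -/
noncomputable def chainProb [Fintype S] (q : S → ℝ) (P : S → S → ℝ) (n : ℕ)
    (A : Set (Fin (n + 1) → S)) : ℝ :=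
  ∑ ω : Fin (n + 1) → S, A.indicator (pathProb q P) ω

/-- `stepDist q P k` is the distribution of `X_{k+1}` when `X_1 ∼ q`. -/
def stepDist [Fintype S] (q : S → ℝ) (P : S → S → ℝ) : ℕ → S → ℝ
  | 0 => q
  | k + 1 => fun y => ∑ x, stepDist q P k x * P x y

end MC

namespace MC

/-- The state space `S⁽²⁾ = {(x,y) : P(x,y) > 0}` of the pair chain. -/
noncomputable instance pairFintype {S : Type*} [Fintype S] (P : S → S → ℝ) :
    Fintype {p : S × S // 0 < P p.1 p.2} :=
  Fintype.ofFinite _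

/-- The transition matrix `P⁽²⁾((x,y),(z,w)) = 1{y = z} P(y,w)` of the pair chain
`(X_k, X_{k+1})` on `S⁽²⁾ = {(x,y) : P(x,y) > 0}`. -/
def pairP {S : Type*} [DecidableEq S] (P : S → S → ℝ) :
    {p : S × S // 0 < P p.1 p.2} → {p : S × S // 0 < P p.1 p.2} → ℝ :=
  fun c d => if c.val.2 = d.val.1 then P d.val.1 d.val.2 else 0

end MC

namespace MC

/-! ### Hoeffding's lemma for finite distributions -/

/-- Hoeffding's lemma for a finitely supported distribution `p`; the oscillation of `X` is only
controlled on the support of `p`. -/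
lemma hoeffding_finite {ι : Type*} [Fintype ι] (p X : ι → ℝ) (hp0 : ∀ i, 0 ≤ p i)
    (hp1 : ∑ i, p i = 1) (R : ℝ) (hR : ∀ i j, 0 < p i → 0 < p j → X i - X j ≤ R) (θ : ℝ) :
    ∑ i, p i * Real.exp (θ * X i) ≤
      Real.exp (θ * ∑ i, p i * X i + θ ^ 2 * R ^ 2 / 8) := by
  classical
  let _ : MeasurableSpace ι := ⊤
  have hsum : ∑ i, ENNReal.ofReal (p i) = 1 := by
    rw [← ENNReal.ofReal_sum_of_nonneg fun i _ => hp0 i, hp1, ENNReal.ofReal_one]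
  let μ : PMF ι := PMF.ofFintype (fun i => ENNReal.ofReal (p i)) hsum
  have hint (g : ι → ℝ) : ∫ i, g i ∂μ.toMeasure = ∑ i, p i * g i := by
    rw [PMF.integral_eq_sum]
    simp [μ, ENNReal.toReal_ofReal (hp0 _)]
  have hne : (univ.filter fun i => 0 < p i).Nonempty := by
    by_contra h
    rw [Finset.not_nonempty_iff_eq_empty, Finset.filter_eq_empty_iff] at h
    have : ∑ i, p i = 0 :=
      Finset.sum_eq_zero fun i hi => le_antisymm (not_lt.mp (h hi)) (hp0 i)
    linarith
  obtain ⟨i₀, hi₀, hmin⟩ := Finset.exists_min_image _ X hne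
  have hae : ∀ᵐ i ∂μ.toMeasure, X i ∈ Set.Icc (X i₀) (X i₀ + R) := by
    rw [MeasureTheory.ae_iff, PMF.toMeasure_apply_eq_zero_iff _ (MeasurableSet.of_discrete),
      Set.disjoint_left]
    intro i hi hi'
    have hpi : 0 < p i := by simpa [μ] using hi
    apply hi'
    have h1 := hR i i₀ hpi (by simpa using hi₀)
    have h2 := hmin i (by simpa using hpi)
    constructor <;> linarith
  have h := (ProbabilityTheory.hasSubgaussianMGF_of_mem_Icc
    (Measurable.of_discrete (f := X)).aemeasurable hae).mgf_le θ
  rw [ProbabilityTheory.mgf, hint, hint] at h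
  set m := ∑ i, p i * X i
  have hc : ∑ i, p i * Real.exp (θ * X i) =
      Real.exp (θ * m) * ∑ i, p i * Real.exp (θ * (X i - m)) := by
    rw [Finset.mul_sum]
    refine Finset.sum_congr rfl fun i _ => ?_
    rw [mul_left_comm, ← Real.exp_add]
    ring_nf
  rw [hc, Real.exp_add]
  refine mul_le_mul_of_nonneg_left (h.trans (Real.exp_le_exp.mpr (le_of_eq ?_)))
    (Real.exp_pos _).le
  simp [div_pow]
  ring

/-! ### Hitting times -/

section Hitting

variable {C : Type*} [Fintype C] [DecidableEq C] {Q : C → C → ℝ}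

lemma survive_nonneg (hQ : IsStochastic Q) (d : C) (n : ℕ) (c : C) : 0 ≤ survive Q d n c := by
  induction n generalizing c with
  | zero => simp only [survive]; split_ifs <;> norm_num
  | succ n ih =>
    simp only [survive]
    split_ifs
    · rfl
    · exact Finset.sum_nonneg fun z _ => mul_nonneg (hQ.1 c z) (ih z)

lemma survive_le_one (hQ : IsStochastic Q) (d : C) (n : ℕ) (c : C) : survive Q d n c ≤ 1 := by
  induction n generalizing c with
  | zero => simp only [survive]; split_ifs <;> norm_num
  | succ n ih =>
    simp only [survive]
    split_ifs
    · exact zero_le_one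
    · calc ∑ z, Q c z * survive Q d n z ≤ ∑ z, Q c z * 1 := by
            gcongr with z; exacts [hQ.1 c z, ih z]
        _ = 1 := by simp [hQ.2]

lemma survive_add_le (hQ : IsStochastic Q) (d : C) (m : ℕ) (r : ℝ)
    (hr : ∀ c, survive Q d m c ≤ r) (n : ℕ) (c : C) :
    survive Q d (n + m) c ≤ r * survive Q d n c := by
  induction n generalizing c with
  | zero =>
    by_cases h : c = d
    · cases m <;> simp [survive, h]
    · simpa [survive, h] using hr c
  | succ n ih =>
    rw [Nat.succ_add]
    simp only [survive]
    split_ifs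
    · simp
    · rw [Finset.mul_sum]
      refine Finset.sum_le_sum fun z _ => ?_
      rw [mul_left_comm]
      exact mul_le_mul_of_nonneg_left (ih z) (hQ.1 c z)

lemma survive_antitone (hQ : IsStochastic Q) (d c : C) : Antitone fun n => survive Q d n c :=
  antitone_nat_of_succ_le fun n => by
    simpa using survive_add_le hQ d 1 1 (survive_le_one hQ d 1) n c

lemma exists_survive_lt_one (hQ : IsStochastic Q) {c d : C}
    (h : Relation.ReflTransGen (fun c d => 0 < Q c d) c d) : ∃ n, survive Q d n c < 1 := by
  induction h using Relation.ReflTransGen.head_induction_on with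
  | refl => exact ⟨0, by simp [survive]⟩
  | @head c e hce _ ih =>
    obtain ⟨n, hn⟩ := ih
    refine ⟨n + 1, ?_⟩
    simp only [survive]
    split_ifs
    · exact zero_lt_one
    · calc ∑ z, Q c z * survive Q d n z < ∑ z, Q c z * 1 := by
            refine Finset.sum_lt_sum
              (fun z _ => mul_le_mul_of_nonneg_left (survive_le_one hQ d n z) (hQ.1 c z))
              ⟨e, Finset.mem_univ _, mul_lt_mul_of_pos_left hn hce⟩
        _ = 1 := by simp [hQ.2]

/-- If `d` can be reached from everywhere, then its expected hitting times are finite: for some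
`m` and `r < 1`, the survival probability shrinks by a factor `r` every `m` steps. -/
lemma summable_survive (hQ : IsStochastic Q) (d : C)
    (h : ∀ c, Relation.ReflTransGen (fun c d => 0 < Q c d) c d) (c : C) :
    Summable fun n => survive Q d n c := by
  choose N hN using fun c => exists_survive_lt_one hQ (h c)
  set m := univ.sup N
  have hm (c : C) : survive Q d m c < 1 :=
    (survive_antitone hQ d c (Finset.le_sup (Finset.mem_univ c))).trans_lt (hN c)
  have : Nonempty C := ⟨d⟩
  obtain ⟨c₀, hc₀⟩ := Finite.exists_max fun c => survive Q d m c
  set r := survive Q d m c₀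
  have hr : r < 1 := hm c₀
  refine summable_of_sum_range_le (c := m / (1 - r)) (fun n => survive_nonneg hQ d n c)
    fun K => ?_
  rw [le_div_iff₀ (by linarith)]
  have h1 : ∑ n ∈ range K, survive Q d n c ≤ ∑ n ∈ range (m + K), survive Q d n c :=
    Finset.sum_le_sum_of_subset_of_nonneg (by simp) fun n _ _ => survive_nonneg hQ d n c
  have h2 : ∑ n ∈ range m, survive Q d n c ≤ m := by
    calc _ ≤ ∑ n ∈ range m, (1 : ℝ) := Finset.sum_le_sum fun n _ => survive_le_one hQ d n c
      _ = m := by simp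
  have h3 : ∑ n ∈ range K, survive Q d (m + n) c ≤ r * ∑ n ∈ range K, survive Q d n c := by
    rw [Finset.mul_sum]
    refine Finset.sum_le_sum fun n _ => ?_
    rw [add_comm]
    exact survive_add_le hQ d m r hc₀ n c
  rw [Finset.sum_range_add] at h1
  linarith

lemma sum_survive_le_HitT (hQ : IsStochastic Q)
    (h : ∀ c d, Relation.ReflTransGen (fun c d => 0 < Q c d) c d) (N : ℕ) (c d : C) :
    ∑ n ∈ range N, survive Q d n c ≤ HitT Q := by
  have hs := summable_survive hQ d (fun c => h c d) c
  have h1 : ∑ n ∈ range N, survive Q d n c ≤ hitExp Q c d := by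
    rw [hitExp, ← ENNReal.ofReal_tsum_of_nonneg (fun n => survive_nonneg hQ d n c) hs,
      ENNReal.toReal_ofReal (tsum_nonneg fun n => survive_nonneg hQ d n c)]
    exact hs.sum_le_tsum _ fun n _ => survive_nonneg hQ d n c
  have h2 : hitExp Q c d ≤ ⨆ y, hitExp Q c y :=
    le_ciSup (f := fun y => hitExp Q c y) (Set.finite_range _).bddAbove d
  have h3 : (⨆ y, hitExp Q c y) ≤ HitT Q :=
    le_ciSup (f := fun x => ⨆ y, hitExp Q x y) (Set.finite_range _).bddAbove c
  linarith

end Hitting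

/-! ### The pair chain -/

section Pair

variable {S : Type*} [Fintype S] [DecidableEq S] {P : S → S → ℝ}

lemma sum_pairP (hP : IsStochastic P) (c : {p : S × S // 0 < P p.1 p.2}) (g : S × S → ℝ) :
    ∑ d, pairP P c d * g d.val = ∑ w, P c.val.2 w * g (c.val.2, w) := by
  classical
  have h := Finset.sum_subtype (p := fun p : S × S => 0 < P p.1 p.2) (F := pairFintype P)
    (univ.filter fun p : S × S => 0 < P p.1 p.2) (by simp)
    (fun p => (if c.val.2 = p.1 then P p.1 p.2 else 0) * g p)
  simp only [pairP]
  rw [← h, Finset.sum_filter_of_ne, Fintype.sum_prod_type, Finset.sum_eq_single c.val.2]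
  · simp
  · intro x _ hx
    simp [Ne.symm hx]
  · simp
  · intro p _ hp
    refine lt_of_le_of_ne (hP.1 _ _) fun h0 => hp ?_
    simp [← h0]

lemma pairP_stochastic (hP : IsStochastic P) : IsStochastic (pairP P) := by
  refine ⟨fun c d => ?_, fun c => ?_⟩
  · simp only [pairP]
    split_ifs
    exacts [d.2.le, le_rfl]
  · simpa [hP.2] using sum_pairP hP c fun _ => 1

lemma reachable_of_matPow_pos (hP : IsStochastic P) (n : ℕ) (x y : S)
    (h : 0 < matPow P n x y) : Relation.ReflTransGen (fun x y => 0 < P x y) x y := by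
  induction n generalizing y with
  | zero =>
    have : x = y := by
      by_contra hne
      simp [matPow, hne] at h
    rw [this]
  | succ n ih =>
    simp only [matPow] at h
    obtain ⟨z, -, hz⟩ := Finset.exists_lt_of_sum_lt (f := fun _ => (0 : ℝ)) (by simpa using h)
    have hzy : 0 < P z y := lt_of_le_of_ne (hP.1 z y) fun h0 => by simp [← h0] at hz
    exact (ih z (pos_of_mul_pos_left hz hzy.le)).tail hzy

lemma pair_reachable (hP : IsStochastic P) (hirr : IsIrreducible P)
    (c d : {p : S × S // 0 < P p.1 p.2}) :
    Relation.ReflTransGen (fun c d => 0 < pairP P c d) c d := by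
  obtain ⟨n, -, hn⟩ := hirr c.val.2 d.val.1
  have h := reachable_of_matPow_pos hP n _ _ hn
  clear hn
  generalize hy : c.val.2 = y at h
  induction h using Relation.ReflTransGen.head_induction_on generalizing c with
  | refl =>
    refine .single ?_
    simpa [pairP, hy] using d.2
  | @head y v hyv _ ih =>
    refine .head (b := ⟨(y, v), hyv⟩) ?_ (ih ⟨(y, v), hyv⟩ rfl)
    simpa [pairP, hy] using hyv

end Pair

/-! ### Mean and moment generating function along paths -/

section Sums

variable {S : Type*} [Fintype S]

/-- The expected sum of `f` over the next `N` transitions of the chain started at `x`. -/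
def sumMean (P : S → S → ℝ) (f : S × S → ℝ) : ℕ → S → ℝ
  | 0 => fun _ => 0
  | N + 1 => fun x => ∑ y, P x y * (f (x, y) + sumMean P f N y)

/-- The expected sum of `f` over `N + 1` transitions, the first of which is `c`. -/
def tailMean (P : S → S → ℝ) (f : S × S → ℝ) (N : ℕ) (c : S × S) : ℝ :=
  f c + sumMean P f N c.2

/-- The moment generating function at `θ` of the sum of `f` over the next `N` transitions of the
chain started at `x`. -/
noncomputable def sumMgf (P : S → S → ℝ) (f : S × S → ℝ) (θ : ℝ) : ℕ → S → ℝ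
  | 0 => fun _ => 1
  | N + 1 => fun x => ∑ y, P x y * (Real.exp (θ * f (x, y)) * sumMgf P f θ N y)

variable {P : S → S → ℝ} {f : S × S → ℝ} {a b : ℝ}

lemma sumMean_succ_ge (hP : IsStochastic P)
    (hf : ∀ p : S × S, 0 < P p.1 p.2 → f p ∈ Set.Icc a b) (N : ℕ) (x : S) :
    sumMean P f N x + a ≤ sumMean P f (N + 1) x := by
  have key (x : S) (g h : S → ℝ) (hgh : ∀ y, 0 < P x y → g y ≤ h y) :
      ∑ y, P x y * g y ≤ ∑ y, P x y * h y := by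
    refine Finset.sum_le_sum fun y _ => ?_
    rcases (hP.1 x y).eq_or_lt with h0 | h0
    · simp [← h0]
    · exact mul_le_mul_of_nonneg_left (hgh y h0) h0.le
  have hc (x : S) : ∑ y, P x y * a = a := by rw [← Finset.sum_mul, hP.2, one_mul]
  induction N generalizing x with
  | zero =>
    have := key x (fun _ => a) (fun y => f (x, y)) fun y hy => (hf (x, y) hy).1
    rw [hc] at this
    simpa [sumMean] using this
  | succ N ih =>
    have h1 := key x (fun y => (f (x, y) + sumMean P f N y) + a)
      (fun y => f (x, y) + sumMean P f (N + 1) y) fun y _ => by linarith [ih y]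
    simp only [mul_add _ _ a, Finset.sum_add_distrib, hc] at h1
    exact h1

/-- Path-space form of `sumMgf`. The weight `q` is arbitrary: the induction absorbs the first
transition into it. -/
lemma sum_pathProb_exp (q : S → ℝ) (θ : ℝ) (n : ℕ) :
    ∑ ω : Fin (n + 1) → S, pathProb q P ω *
      Real.exp (θ * ∑ k : Fin n, f (ω k.castSucc, ω k.succ)) =
      ∑ x, q x * sumMgf P f θ n x := by
  induction n generalizing q with
  | zero =>
    rw [← (Equiv.funUnique (Fin 1) S).symm.sum_comp]
    simp [pathProb, sumMgf]
  | succ n ih =>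
    rw [← (Fin.consEquiv fun _ : Fin (n + 2) => S).sum_comp, Fintype.sum_prod_type]
    refine Finset.sum_congr rfl fun x _ => ?_
    have h := ih fun y => P x y * Real.exp (θ * f (x, y))
    simp only [sumMgf]
    simp only [mul_assoc] at h
    rw [← h, Finset.mul_sum]
    refine Finset.sum_congr rfl fun ω _ => ?_
    simp only [pathProb, Fin.consEquiv_apply, Fin.prod_univ_succ, Fin.sum_univ_succ,
      Fin.castSucc_zero, Fin.cons_zero, Fin.cons_succ, ← Fin.succ_castSucc, mul_add,
      Real.exp_add]
    ring

lemma stepDist_succ' (q : S → ℝ) (k : ℕ) :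
    stepDist q P (k + 1) = stepDist (fun y => ∑ x, q x * P x y) P k := by
  induction k with
  | zero => rfl
  | succ k ih => rw [stepDist, ih]; rfl

lemma sum_stepDist (q : S → ℝ) (n : ℕ) :
    ∑ k : Fin n, ∑ x, ∑ z, stepDist q P (k : ℕ) x * P x z * f (x, z) =
      ∑ x, q x * sumMean P f n x := by
  induction n generalizing q with
  | zero => simp [sumMean]
  | succ n ih =>
    rw [Fin.sum_univ_succ]
    simp only [Fin.val_succ, Fin.val_zero, stepDist_succ', ih]
    simp only [sumMean, mul_add, Finset.sum_add_distrib, Finset.mul_sum, Finset.sum_mul,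
      stepDist, mul_assoc]
    rw [Finset.sum_comm (f := fun y x => q x * (P x y * sumMean P f n y))]

/-! ### The oscillation bound -/

variable [DecidableEq S]

lemma tailMean_succ (hP : IsStochastic P) (N : ℕ) (c : {p : S × S // 0 < P p.1 p.2}) :
    tailMean P f (N + 1) c = f c + ∑ d, pairP P c d * tailMean P f N d := by
  rw [sum_pairP hP c (tailMean P f N)]
  rfl

/-- The coupling bound: starting with the transition `c` instead of `d` changes the expected sum
by at most `b - a` per step, and only until the pair chain from `c` hits `d`. -/
lemma tailMean_sub_le (hP : IsStochastic P)
    (hf : ∀ p : S × S, 0 < P p.1 p.2 → f p ∈ Set.Icc a b) (N : ℕ)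
    (c d : {p : S × S // 0 < P p.1 p.2}) :
    tailMean P f N c - tailMean P f N d ≤
      (b - a) * ∑ n ∈ range (N + 1), survive (pairP P) d n c := by
  have hQ := pairP_stochastic hP
  induction N generalizing c with
  | zero =>
    by_cases h : c = d
    · simp [h, survive]
    · have h1 := (hf c c.2).2
      have h2 := (hf d d.2).1
      simp [tailMean, sumMean, survive, h]
      linarith
  | succ N ih =>
    by_cases h : c = d
    · subst h
      have h0 (n : ℕ) : survive (pairP P) c n c = 0 := by cases n <;> simp [survive]
      simp [h0]
    · have h1 := (hf c c.2).2
      have h2 : tailMean P f N d + a ≤ tailMean P f (N + 1) d := by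
        have := sumMean_succ_ge hP hf N d.val.2
        simp only [tailMean]
        linarith
      have h3 : ∑ e, pairP P c e * tailMean P f N e ≤ ∑ e, pairP P c e *
          (tailMean P f N d + (b - a) * ∑ n ∈ range (N + 1), survive (pairP P) d n e) :=
        Finset.sum_le_sum fun e _ =>
          mul_le_mul_of_nonneg_left (by linarith [ih e]) (hQ.1 c e)
      have h4 : ∑ e, pairP P c e *
          (tailMean P f N d + (b - a) * ∑ n ∈ range (N + 1), survive (pairP P) d n e) =
          tailMean P f N d +
            (b - a) * ∑ n ∈ range (N + 1), survive (pairP P) d (n + 1) c := by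
        simp only [survive, h, if_false, mul_add, Finset.sum_add_distrib]
        rw [← Finset.sum_mul, hQ.2, one_mul, Finset.sum_comm, Finset.mul_sum]
        congr 1
        refine Finset.sum_congr rfl fun e _ => ?_
        rw [← Finset.mul_sum, mul_left_comm]
      rw [Finset.sum_range_succ', mul_add, tailMean_succ hP]
      have h5 : survive (pairP P) d 0 c = 1 := by simp [survive, h]
      rw [h5]
      linarith

lemma tailMean_sub_le_HitT (hP : IsStochastic P) (hirr : IsIrreducible P)
    (hf : ∀ p : S × S, 0 < P p.1 p.2 → f p ∈ Set.Icc a b) (N : ℕ)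
    (c d : S × S) (hc : 0 < P c.1 c.2) (hd : 0 < P d.1 d.2) :
    tailMean P f N c - tailMean P f N d ≤ (b - a) * HitT (pairP P) := by
  have hab : a ≤ b := (hf c hc).1.trans (hf c hc).2
  refine (tailMean_sub_le hP hf N ⟨c, hc⟩ ⟨d, hd⟩).trans ?_
  exact mul_le_mul_of_nonneg_left
    (sum_survive_le_HitT (pairP_stochastic hP) (pair_reachable hP hirr) _ _ _) (by linarith)

/-! ### The moment generating function bound -/

lemma sumMgf_le (hP : IsStochastic P) (hirr : IsIrreducible P)
    (hf : ∀ p : S × S, 0 < P p.1 p.2 → f p ∈ Set.Icc a b) (θ : ℝ) (N : ℕ) (x : S) :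
    sumMgf P f θ N x ≤ Real.exp (θ * sumMean P f N x +
      N * (θ ^ 2 * ((b - a) * HitT (pairP P)) ^ 2 / 8)) := by
  induction N generalizing x with
  | zero => simp [sumMgf, sumMean]
  | succ N ih =>
    set V := θ ^ 2 * ((b - a) * HitT (pairP P)) ^ 2 / 8
    have h := hoeffding_finite (P x) (fun y => tailMean P f N (x, y)) (hP.1 x) (hP.2 x) _
      (fun y z hy hz => tailMean_sub_le_HitT hP hirr hf N (x, y) (x, z) hy hz) θ
    calc sumMgf P f θ (N + 1) x
        ≤ ∑ y, P x y * (Real.exp (θ * f (x, y)) *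
            Real.exp (θ * sumMean P f N y + N * V)) := by
          simp only [sumMgf]
          gcongr with y
          exacts [hP.1 x y, ih y]
      _ = Real.exp (N * V) * ∑ y, P x y * Real.exp (θ * tailMean P f N (x, y)) := by
          rw [Finset.mul_sum]
          refine Finset.sum_congr rfl fun y _ => ?_
          rw [← Real.exp_add, mul_left_comm, ← Real.exp_add, tailMean]
          ring_nf
      _ ≤ Real.exp (N * V) * Real.exp (θ * sumMean P f (N + 1) x + V) :=
          mul_le_mul_of_nonneg_left h (Real.exp_pos _).le
      _ = _ := by
          rw [← Real.exp_add]
          push_cast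
          ring_nf

lemma sum_mul_mgf_le (hP : IsStochastic P) (hirr : IsIrreducible P)
    (hf : ∀ p : S × S, 0 < P p.1 p.2 → f p ∈ Set.Icc a b) {q : S → ℝ} (hq : IsProbVec q)
    (θ : ℝ) (n : ℕ) :
    ∑ x, q x * sumMgf P f θ n x ≤ Real.exp (θ * ∑ x, q x * sumMean P f n x +
      n * (θ ^ 2 * ((b - a) * HitT (pairP P)) ^ 2 / 8)) := by
  cases n with
  | zero => simp [sumMgf, sumMean, hq.2]
  | succ N =>
    set V := θ ^ 2 * ((b - a) * HitT (pairP P)) ^ 2 / 8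
    -- The pair `(X_1, X_2)` is a single draw, so that the law of `X_1` costs no extra factor.
    have hpos (c : S × S) (hc : 0 < q c.1 * P c.1 c.2) : 0 < P c.1 c.2 :=
      pos_of_mul_pos_right hc (hq.1 _)
    have h := hoeffding_finite (fun c : S × S => q c.1 * P c.1 c.2) (tailMean P f N)
      (fun c => mul_nonneg (hq.1 _) (hP.1 _ _))
      (by simp [Fintype.sum_prod_type, ← Finset.mul_sum, hP.2, hq.2]) _
      (fun c d hc hd => tailMean_sub_le_HitT hP hirr hf N c d (hpos c hc) (hpos d hd)) θ
    simp only [Fintype.sum_prod_type, mul_assoc, ← Finset.mul_sum] at h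
    calc ∑ x, q x * sumMgf P f θ (N + 1) x
        ≤ ∑ x, q x * ∑ y, P x y * (Real.exp (θ * f (x, y)) *
            Real.exp (θ * sumMean P f N y + N * V)) := by
          simp only [sumMgf]
          gcongr with x _ y
          exacts [hq.1 x, hP.1 x y, sumMgf_le hP hirr hf θ N y]
      _ = Real.exp (N * V) *
            ∑ x, q x * ∑ y, P x y * Real.exp (θ * tailMean P f N (x, y)) := by
          simp only [Finset.mul_sum]
          refine Finset.sum_congr rfl fun x _ => Finset.sum_congr rfl fun y _ => ?_
          rw [mul_left_comm (Real.exp _), mul_left_comm (Real.exp _), ← Real.exp_add,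
            ← Real.exp_add, tailMean]
          ring_nf
      _ ≤ Real.exp (N * V) * Real.exp (θ * ∑ x, q x * sumMean P f (N + 1) x + V) :=
          mul_le_mul_of_nonneg_left h (Real.exp_pos _).le
      _ = _ := by
          rw [← Real.exp_add]
          push_cast
          ring_nf

end Sums

end MC

open MC in
/-- **Hoeffding inequality for functions of transitions** (Theorem 2).
For a Markov chain on finite `S` with initial distribution `q` and irreducible `P`,
and `f⁽²⁾` a function on the transitions `S⁽²⁾ = {(x,y) : P(x,y) > 0}` taking values
in `[a,b]` (here given as a function on `S × S` whose values on `S⁽²⁾` lie in `[a,b]`;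
its values off `S⁽²⁾` are irrelevant), for every `t > 0`,
`Pr_q(|∑_{k=1}^n (f⁽²⁾(X_k,X_{k+1}) − E_q[f⁽²⁾(X_k,X_{k+1})])| ≥ t) ≤ 2 exp(−t²/(2ν²))`,
where `ν² = (1/4) n (b−a)² HitT(P⁽²⁾)²`. -/
theorem markov_hoeffding_pairs {S : Type*} [Fintype S] [DecidableEq S]
    (P : S → S → ℝ) (hP : IsStochastic P) (hirr : IsIrreducible P)
    (q : S → ℝ) (hq : IsProbVec q)
    (f2 : S × S → ℝ) (a b : ℝ) (hf2 : ∀ p : S × S, 0 < P p.1 p.2 → f2 p ∈ Set.Icc a b)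
    (n : ℕ) (t : ℝ) (ht : 0 < t) :
    chainProb q P n
      {ω | t ≤ |∑ k : Fin n, (f2 (ω k.castSucc, ω k.succ) -
        ∑ x, ∑ z, stepDist q P (k : ℕ) x * P x z * f2 (x, z))|} ≤
      2 * Real.exp (-t ^ 2 / (2 * (1 / 4 * n * (b - a) ^ 2 * HitT (pairP P) ^ 2))) := by
  set m := ∑ x, q x * sumMean P f2 n x with hm
  set v := 1 / 4 * n * (b - a) ^ 2 * HitT (pairP P) ^ 2 with hv
  -- For `v = 0`, the convention `t / 0 = 0` gives the trivial bound `2`, as in the statement.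
  set θ := t / v with hθ
  have hθ0 : 0 ≤ θ := div_nonneg ht.le (by positivity)
  have hexp : θ ^ 2 * v / 2 - θ * t = -t ^ 2 / (2 * v) := by
    by_cases h : v = 0
    · simp [hθ, h]
    · rw [hθ]
      field_simp
      ring
  have hmean := sum_stepDist (P := P) (f := f2) q n
  let Z : (Fin (n + 1) → S) → ℝ := fun ω => ∑ k : Fin n, f2 (ω k.castSucc, ω k.succ)
  have hmgf (s : ℝ) (hs : s ^ 2 = θ ^ 2) :
      ∑ ω, pathProb q P ω * Real.exp (s * (Z ω - m) - θ * t) ≤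
        Real.exp (-t ^ 2 / (2 * v)) := by
    have h := sum_mul_mgf_le hP hirr hf2 hq s n
    rw [← sum_pathProb_exp] at h
    calc ∑ ω, pathProb q P ω * Real.exp (s * (Z ω - m) - θ * t)
        = Real.exp (-(s * m) - θ * t) * ∑ ω, pathProb q P ω * Real.exp (s * Z ω) := by
          rw [Finset.mul_sum]
          refine Finset.sum_congr rfl fun ω _ => ?_
          rw [mul_left_comm, ← Real.exp_add]
          ring_nf
      _ ≤ Real.exp (-(s * m) - θ * t) * _ :=
          mul_le_mul_of_nonneg_left h (Real.exp_pos _).le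
      _ = _ := by
          rw [← Real.exp_add, ← hexp, hv, hs, ← hm]
          ring_nf
  have h1 := hmgf θ rfl
  have h2 := hmgf (-θ) (neg_sq θ)
  rw [two_mul]
  refine le_trans ?_ (add_le_add h1 h2)
  rw [← Finset.sum_add_distrib, chainProb]
  refine Finset.sum_le_sum fun ω _ => ?_
  have hp : 0 ≤ pathProb q P ω := mul_nonneg (hq.1 _) (Finset.prod_nonneg fun i _ => hP.1 _ _)
  rw [← mul_add]
  by_cases hω : t ≤ |Z ω - m|
  · rw [Set.indicator_apply]
    refine (ite_le_sup _ _ _).trans (sup_le ?_ (by positivity))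
    refine le_mul_of_one_le_right hp ?_
    rcases le_abs.mp hω with h | h
    · have := Real.one_le_exp (x := θ * (Z ω - m) - θ * t) (by nlinarith)
      linarith [Real.exp_pos (-θ * (Z ω - m) - θ * t)]
    · have := Real.one_le_exp (x := -θ * (Z ω - m) - θ * t) (by nlinarith)
      linarith [Real.exp_pos (θ * (Z ω - m) - θ * t)]
  · rw [Set.indicator_of_notMem]
    · positivity
    · simpa [Finset.sum_sub_distrib, hmean, ← hm, Z] using hω
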